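/- Let α > 1/2 be real. Then there exists m ≥ 3 such that the star metric d on {0,1,…,m−1}, defined by d(i,i) = 0, d(0,j) = d(j,0) = 1 for j ≠ 0, and d(i,j) = 2 for distinct nonzero i, j, has the property that d^α (given by d^α(i,j) := (d(i,j))^α) is not Euclidean. More precisely, if m ≥ 3 and 2^{2α−1} > (m−1)/(m−2), then d^α is not Euclidean. -/

import Mathlib

/-!
If `Φ` realizes `d^α`, the vectors `v j = Φ j - Φ 0`, `j = 1, …, m-1`, are unit vectors, and by
polarization their pairwise inner products are `(1 + 1 - 2^(2α)) / 2 = 1 - c` with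
`c = 2^(2α-1)`. Expanding `0 ≤ ‖∑ j, v j‖²` gives `0 ≤ n * (1 + (n - 1) * (1 - c))` for `n = m - 1`,
that is, `c ≤ (m-1)/(m-2)`. As `c > 1` when `α > 1/2` and `(m-1)/(m-2) → 1`, this fails for large `m`.
-/

/-- A function `d : X → X → ℝ` is Euclidean if it is realized as the norm-distance of a map
into a real inner product space. -/
def IsEuclidean {X : Type*} (d : X → X → ℝ) : Prop :=
  ∃ (H : Type) (inst : NormedAddCommGroup H),
    letI := inst
    ∃ (_ : InnerProductSpace ℝ H) (Φ : X → H),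
      ∀ x y, ‖Φ x - Φ y‖ = d x y

/-- The star metric on `{0, 1, …, m-1}`: `d(i,i) = 0`, `d(0,j) = d(j,0) = 1` for `j ≠ 0`,
and `d(i,j) = 2` for distinct nonzero `i, j`. -/
def starDist (m : ℕ) (i j : Fin m) : ℝ :=
  if i = j then 0 else if i.val = 0 ∨ j.val = 0 then 1 else 2

/-- Among `n` unit vectors with constant pairwise inner product `t`, one has `t ≥ -1/(n-1)`
(stated without division, hence also for `n = 1`): the squared norm of their sum is nonnegative. -/
theorem equiangular_bound {H : Type*} [NormedAddCommGroup H] [InnerProductSpace ℝ H]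
    {n : ℕ} (hn : 0 < n) (v : Fin n → H) (t : ℝ)
    (hv : ∀ i j, inner ℝ (v i) (v j) = if i = j then 1 else t) :
    0 ≤ 1 + ((n : ℝ) - 1) * t := by
  have h0 : 0 ≤ inner ℝ (∑ i, v i) (∑ j, v j) := real_inner_self_nonneg
  have h1 : inner ℝ (∑ i, v i) (∑ j, v j) = (n : ℝ) * (1 + ((n : ℝ) - 1) * t) := by
    have hrow : ∀ i : Fin n, ∑ j, (if i = j then (1 : ℝ) else t) = 1 + ((n : ℝ) - 1) * t := by
      intro i
      have hsplit : ∀ j : Fin n,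
          (if i = j then (1 : ℝ) else t) = (if i = j then 1 - t else 0) + t := by
        intro j; split_ifs <;> ring
      simp only [hsplit, Finset.sum_add_distrib, Finset.sum_ite_eq, Finset.mem_univ, if_true,
        Finset.sum_const, Finset.card_univ, Fintype.card_fin, nsmul_eq_mul]
      ring
    rw [sum_inner]
    simp only [inner_sum, hv, hrow]
    simp
    ring
  rw [h1] at h0
  exact nonneg_of_mul_nonneg_right h0 (by exact_mod_cast hn)

theorem star_rpow_not_euclidean_of_lt (α : ℝ) (m : ℕ) (hm : 3 ≤ m)
    (hlt : (2 : ℝ) ^ (2 * α - 1) > ((m : ℝ) - 1) / ((m : ℝ) - 2)) :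
    ¬ IsEuclidean (fun i j : Fin m => starDist m i j ^ α) := by
  rintro ⟨H, inst, inst', Φ, hΦ⟩
  obtain ⟨n, rfl⟩ : ∃ n, m = n + 1 := ⟨m - 1, by omega⟩
  have hn : (2 : ℝ) ≤ n := by exact_mod_cast (by omega : 2 ≤ n)
  have hc : ((2 : ℝ) ^ α) ^ 2 = 2 * 2 ^ (2 * α - 1) := by
    rw [Real.rpow_sub_one two_ne_zero, mul_comm 2 α, Real.rpow_mul zero_le_two]
    norm_num
    ring
  have hunit : ∀ i : Fin n, ‖Φ i.succ - Φ 0‖ = 1 := by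
    intro i
    rw [hΦ]
    simp [starDist]
  have hdist : ∀ i j : Fin n, i ≠ j → ‖Φ i.succ - Φ j.succ‖ = 2 ^ α := by
    intro i j hij
    rw [hΦ]
    simp [starDist, hij]
  have key := equiangular_bound (n := n) (by omega) (fun i => Φ i.succ - Φ 0)
    (1 - 2 ^ (2 * α - 1)) (by
      intro i j
      split_ifs with hij
      · subst hij
        rw [real_inner_self_eq_norm_sq, hunit]
        norm_num
      · have h := norm_sub_sq_real (Φ i.succ - Φ 0) (Φ j.succ - Φ 0)
        rw [sub_sub_sub_cancel_right, hdist i j hij, hunit, hunit, hc] at h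
        linarith)
  rw [gt_iff_lt, div_lt_iff₀ (by push_cast; linarith)] at hlt
  push_cast at hlt
  nlinarith

/-- For every real `α > 1/2` there exists `m ≥ 3` such that the α-th power of the star metric
on `m` points is not Euclidean; more precisely, this holds whenever `m ≥ 3` and
`2^(2α-1) > (m-1)/(m-2)`. -/
theorem star_rpow_not_euclidean (α : ℝ) (hα : 1 / 2 < α) :
    (∃ m : ℕ, 3 ≤ m ∧
      ¬ IsEuclidean (fun i j : Fin m => starDist m i j ^ α)) ∧
    (∀ m : ℕ, 3 ≤ m → (2 : ℝ) ^ (2 * α - 1) > ((m : ℝ) - 1) / ((m : ℝ) - 2) →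
      ¬ IsEuclidean (fun i j : Fin m => starDist m i j ^ α)) := by
  refine ⟨?_, star_rpow_not_euclidean_of_lt α⟩
  have hc : (1 : ℝ) < 2 ^ (2 * α - 1) := Real.one_lt_rpow one_lt_two (by linarith)
  -- With `m = k + 3` the threshold is `(m-1)/(m-2) = 1 + 1/(k+1)`.
  obtain ⟨k, hk⟩ := exists_nat_one_div_lt (sub_pos.mpr hc)
  refine ⟨k + 3, by omega, star_rpow_not_euclidean_of_lt α _ (by omega) ?_⟩
  have hk0 : (0 : ℝ) < (k : ℝ) + 1 := by positivity
  have he : (((k + 3 : ℕ) : ℝ) - 1) / (((k + 3 : ℕ) : ℝ) - 2) = 1 + 1 / ((k : ℝ) + 1) := by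
    push_cast
    rw [show (k : ℝ) + 3 - 2 = k + 1 by ring]
    field_simp
    ring
  rw [he]
  linarith
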